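/- Weighted Sobolev embedding in dimension three: Let N = 3 and K(y) = exp(|y|²/4) for y ∈ ℝ³. If v : ℝ³ → ℝ is locally integrable with a weak gradient g : ℝ³ → ℝ³ such that ∫_{ℝ³} K(y)( |v(y)|² + |g(y)|² ) dy < ∞, then ∫_{ℝ³} K(y) |v(y)|⁶ dy < ∞; i.e. H¹(K) ⊆ L^{2*}(K) with 2* = 2N/(N−2) = 6. -/

import Mathlib

open MeasureTheory

/-- `g` is a weak gradient of the locally integrable function `f` on `ℝ³`. -/
def HasWeakGradient (f : EuclideanSpace ℝ (Fin 3) → ℝ)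
    (g : EuclideanSpace ℝ (Fin 3) → EuclideanSpace ℝ (Fin 3)) : Prop :=
  MeasureTheory.LocallyIntegrable f volume ∧
  ∀ φ : EuclideanSpace ℝ (Fin 3) → ℝ, ContDiff ℝ (⊤ : ℕ∞) φ → HasCompactSupport φ →
    ∀ i : Fin 3,
      ∫ y, f y * fderiv ℝ φ y (EuclideanSpace.single i 1) = -∫ y, g y i * φ y

open scoped Convolution ENNReal Topology

theorem young_aux {G : Type*} [NormedAddCommGroup G] [NormedSpace ℝ G] [FiniteDimensional ℝ G]
    [MeasurableSpace G] [BorelSpace G] (μ : Measure G) [μ.IsAddHaarMeasure]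
    (ρ : G → ℝ) (hρ : Continuous ρ) (hρi : ∫⁻ x, ‖ρ x‖ₑ ∂μ = 1)
    (h : G → ℝ) (hh : AEStronglyMeasurable h μ) :
    eLpNorm (ρ ⋆[ContinuousLinearMap.lsmul ℝ ℝ, μ] h) 2 μ ≤ eLpNorm h 2 μ := by
  wlog hm : StronglyMeasurable h generalizing h
  · have e := hh.ae_eq_mk
    rw [eLpNorm_congr_ae e, convolution_congr _ (Filter.EventuallyEq.refl _ ρ) e]
    exact this _ hh.stronglyMeasurable_mk.aestronglyMeasurable hh.stronglyMeasurable_mk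
  have hm' := hm.measurable
  have hρ' := hρ.measurable
  rw [eLpNorm_eq_lintegral_rpow_enorm_toReal (by simp) (by simp),
    eLpNorm_eq_lintegral_rpow_enorm_toReal (by simp) (by simp)]
  gcongr ?_ ^ _
  have key : ∀ x, ‖(ρ ⋆[ContinuousLinearMap.lsmul ℝ ℝ, μ] h) x‖ₑ ^ (2:ℝ≥0∞).toReal ≤
      ∫⁻ t, ‖ρ t‖ₑ * ‖h (x - t)‖ₑ ^ (2:ℝ) ∂μ := by
    intro x
    have h1 : ‖(ρ ⋆[ContinuousLinearMap.lsmul ℝ ℝ, μ] h) x‖ₑ ≤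
        ∫⁻ t, ‖ρ t‖ₑ ^ (1/2:ℝ) * (‖ρ t‖ₑ * ‖h (x - t)‖ₑ ^ (2:ℝ)) ^ (1/2:ℝ) ∂μ := by
      refine (enorm_integral_le_lintegral_enorm _).trans (le_of_eq ?_)
      congr 1
      ext t
      rw [ENNReal.mul_rpow_of_nonneg _ _ (by norm_num), ← ENNReal.rpow_mul, ← mul_assoc,
        ← ENNReal.rpow_add_of_nonneg _ _ (by norm_num) (by norm_num)]
      norm_num [enorm_mul]
    have h2 := ENNReal.lintegral_mul_norm_pow_le (μ := μ) (f := fun t => ‖ρ t‖ₑ)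
      (g := fun t => ‖ρ t‖ₑ * ‖h (x - t)‖ₑ ^ (2:ℝ)) (p := 1/2) (q := 1/2)
      (by fun_prop) (by fun_prop) (by norm_num) (by norm_num) (by norm_num)
    rw [hρi, ENNReal.one_rpow, one_mul] at h2
    calc _ ≤ ((∫⁻ t, ‖ρ t‖ₑ * ‖h (x - t)‖ₑ ^ (2:ℝ) ∂μ) ^ (1/2:ℝ)) ^ (2:ℝ≥0∞).toReal := by
          gcongr
          exact h1.trans h2
      _ = _ := by
          rw [← ENNReal.rpow_mul]; norm_num
  calc _ ≤ ∫⁻ x, ∫⁻ t, ‖ρ t‖ₑ * ‖h (x - t)‖ₑ ^ (2:ℝ) ∂μ ∂μ := lintegral_mono key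
    _ = ∫⁻ t, ∫⁻ x, ‖ρ t‖ₑ * ‖h (x - t)‖ₑ ^ (2:ℝ) ∂μ ∂μ := by
        apply lintegral_lintegral_swap
        fun_prop
    _ = ∫⁻ t, ‖ρ t‖ₑ * ∫⁻ x, ‖h x‖ₑ ^ (2:ℝ) ∂μ ∂μ := by
        congr 1
        ext t
        rw [lintegral_const_mul _ (by fun_prop)]
        congr 1
        exact lintegral_sub_right_eq_self (fun x => ‖h x‖ₑ ^ (2:ℝ)) t
    _ = _ := by
        rw [lintegral_mul_const _ (by fun_prop), hρi, one_mul]; simp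

theorem conv_deriv (v : EuclideanSpace ℝ (Fin 3) → ℝ) (hv : LocallyIntegrable v volume)
    (G : EuclideanSpace ℝ (Fin 3) → ℝ) (hG : LocallyIntegrable G volume) (i : Fin 3)
    (hw : ∀ φ : EuclideanSpace ℝ (Fin 3) → ℝ, ContDiff ℝ (⊤ : ℕ∞) φ → HasCompactSupport φ →
      ∫ y, v y * fderiv ℝ φ y (EuclideanSpace.single i 1) = -∫ y, G y * φ y)
    (η : EuclideanSpace ℝ (Fin 3) → ℝ) (hη : ContDiff ℝ (⊤ : ℕ∞) η) (hηc : HasCompactSupport η)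
    (ρ : EuclideanSpace ℝ (Fin 3) → ℝ) (hρ : ContDiff ℝ (⊤ : ℕ∞) ρ) (hρc : HasCompactSupport ρ)
    (x : EuclideanSpace ℝ (Fin 3)) :
    fderiv ℝ (ρ ⋆[ContinuousLinearMap.lsmul ℝ ℝ, volume] (fun y => η y * v y)) x
      (EuclideanSpace.single i 1) =
    (ρ ⋆[ContinuousLinearMap.lsmul ℝ ℝ, volume]
      (fun y => η y * G y + fderiv ℝ η y (EuclideanSpace.single i 1) * v y)) x := by
  have hηv : LocallyIntegrable (fun y => η y * v y) volume :=
    (hv.integrable_smul_left_of_hasCompactSupport hη.continuous hηc).locallyIntegrable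
  have hρ1 : ContDiff ℝ 1 ρ := hρ.of_le (by exact_mod_cast le_top)
  have hη1 : ContDiff ℝ 1 η := hη.of_le (by exact_mod_cast le_top)
  have hdη : Continuous (fun y => fderiv ℝ η y (EuclideanSpace.single i 1)) :=
    (hη1.continuous_fderiv (by norm_num)).clm_apply continuous_const
  have hdρ : Continuous (fun y => fderiv ℝ ρ y (EuclideanSpace.single i 1)) :=
    (hρ1.continuous_fderiv (by norm_num)).clm_apply continuous_const
  have hdηc : HasCompactSupport (fun y => fderiv ℝ η y (EuclideanSpace.single i 1)) :=
    hηc.fderiv_apply ℝ _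
  rw [← convolution_flip, (hρc.hasFDerivAt_convolution_right
    (ContinuousLinearMap.lsmul ℝ ℝ).flip hηv hρ1 x).fderiv,
    convolution_precompR_apply _ hηv (hρc.fderiv ℝ) (hρ1.continuous_fderiv (by norm_num)),
    convolution_lsmul_swap, convolution_def]
  have hφ : ContDiff ℝ (⊤ : ℕ∞) (fun y => ρ (x - y) * η y) :=
    (hρ.comp (contDiff_const.sub contDiff_id)).mul hη
  have hφc : HasCompactSupport (fun y => ρ (x - y) * η y) := hηc.mul_left
  have hder : ∀ y, fderiv ℝ (fun y => ρ (x - y) * η y) y (EuclideanSpace.single i 1) =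
      ρ (x - y) * fderiv ℝ η y (EuclideanSpace.single i 1)
        - fderiv ℝ ρ (x - y) (EuclideanSpace.single i 1) * η y := by
    intro y
    have h1 : HasFDerivAt (fun y => ρ (x - y)) (-(fderiv ℝ ρ (x - y))) y := by
      have := ((hρ1.differentiable (by norm_num)) (x - y)).hasFDerivAt.comp y
        ((hasFDerivAt_id y).const_sub x)
      convert! this using 1
      ext; simp
    have h2 : HasFDerivAt (fun y => ρ (x - y) * η y) _ y :=
      h1.mul ((hη1.differentiable (by norm_num)) y).hasFDerivAt
    rw [h2.fderiv]
    simp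
    ring
  have key := hw _ hφ hφc
  simp only [hder] at key
  have c1 : Continuous fun y => ρ (x - y) := hρ.continuous.comp (continuous_const.sub continuous_id)
  have c2 : Continuous fun y => fderiv ℝ ρ (x - y) (EuclideanSpace.single i 1) :=
    hdρ.comp (continuous_const.sub continuous_id)
  have i1 : Integrable (fun y => v y * (ρ (x - y) * fderiv ℝ η y (EuclideanSpace.single i 1))) := by
    have := hv.integrable_smul_left_of_hasCompactSupport (c1.mul hdη) hdηc.mul_left
    refine this.congr (.of_forall fun y => ?_)
    simp; ring
  have i2 : Integrable (fun y => v y * (fderiv ℝ ρ (x - y) (EuclideanSpace.single i 1) * η y)) := by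
    have := hv.integrable_smul_left_of_hasCompactSupport (c2.mul hη.continuous) hηc.mul_left
    refine this.congr (.of_forall fun y => ?_)
    simp; ring
  have i3 : Integrable (fun y => G y * (ρ (x - y) * η y)) := by
    have := hG.integrable_smul_left_of_hasCompactSupport (c1.mul hη.continuous) hηc.mul_left
    refine this.congr (.of_forall fun y => ?_)
    simp; ring
  simp only [mul_sub] at key
  rw [integral_sub i1 i2] at key
  have e1 : ∫ y, ρ (x - y) • (η y * G y + fderiv ℝ η y (EuclideanSpace.single i 1) * v y) =
      (∫ y, G y * (ρ (x - y) * η y)) +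
        ∫ y, v y * (ρ (x - y) * fderiv ℝ η y (EuclideanSpace.single i 1)) := by
    rw [← integral_add i3 i1]
    congr 1; ext y; simp; ring
  rw [e1]
  have e2 : ∫ t, ((ContinuousLinearMap.lsmul ℝ ℝ).flip (η t * v t))
      (fderiv ℝ ρ (x - t) (EuclideanSpace.single i 1)) =
      ∫ y, v y * (fderiv ℝ ρ (x - y) (EuclideanSpace.single i 1) * η y) := by
    congr 1; ext y; simp; ring
  rw [e2]
  linarith

theorem norm_clm_le (L : EuclideanSpace ℝ (Fin 3) →L[ℝ] ℝ) :
    ‖L‖ ≤ ∑ i, ‖L (EuclideanSpace.single i 1)‖ := by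
  refine L.opNorm_le_bound (by positivity) fun x => ?_
  have hx : x = ∑ i, x i • EuclideanSpace.single i (1 : ℝ) := by
    ext j
    simp [Finset.sum_apply, Pi.single_apply]
  conv_lhs => rw [hx]
  rw [map_sum, Finset.sum_mul]
  refine (norm_sum_le _ _).trans (Finset.sum_le_sum fun i _ => ?_)
  rw [map_smul, norm_smul, mul_comm]
  gcongr
  exact PiLp.norm_apply_le x i

theorem local_sobolev : ∃ C : NNReal, ∀ (v : EuclideanSpace ℝ (Fin 3) → ℝ)
    (_ : LocallyIntegrable v volume)
    (G : Fin 3 → EuclideanSpace ℝ (Fin 3) → ℝ) (_ : ∀ i, LocallyIntegrable (G i) volume)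
    (_ : ∀ i, ∀ φ : EuclideanSpace ℝ (Fin 3) → ℝ, ContDiff ℝ (⊤ : ℕ∞) φ → HasCompactSupport φ →
      ∫ y, v y * fderiv ℝ φ y (EuclideanSpace.single i 1) = -∫ y, G i y * φ y)
    (η : EuclideanSpace ℝ (Fin 3) → ℝ) (_ : ContDiff ℝ (⊤ : ℕ∞) η) (_ : HasCompactSupport η),
    eLpNorm (fun y => η y * v y) 6 volume ≤
      C * ∑ i, eLpNorm (fun y => η y * G i y + fderiv ℝ η y (EuclideanSpace.single i 1) * v y)
        2 volume := by
  refine ⟨eLpNormLESNormFDerivOfEqInnerConst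
    (volume : Measure (EuclideanSpace ℝ (Fin 3))) ((2 : NNReal) : ℝ), ?_⟩
  intro v hv G hG hw η hη hηc
  let B : ℕ → ContDiffBump (0 : EuclideanSpace ℝ (Fin 3)) := fun n =>
    ⟨1 / (n + 1), 2 / (n + 1), by positivity, by gcongr; norm_num⟩
  have hηv : LocallyIntegrable (fun y => η y * v y) volume :=
    (hv.integrable_smul_left_of_hasCompactSupport hη.continuous hηc).locallyIntegrable
  have hη1 : ContDiff ℝ 1 η := hη.of_le (by exact_mod_cast le_top)
  have hlim : ∀ᵐ x, Filter.Tendsto (fun n => ((B n).normed volume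
      ⋆[ContinuousLinearMap.lsmul ℝ ℝ, volume] (fun y => η y * v y)) x) Filter.atTop
      (𝓝 (η x * v x)) := by
    refine ContDiffBump.ae_convolution_tendsto_right_of_locallyIntegrable (K := 2) ?_ ?_ hηv
    · have := (tendsto_one_div_add_atTop_nhds_zero_nat (𝕜 := ℝ)).const_mul 2
      rw [mul_zero] at this
      refine this.congr fun n => ?_
      simp [B]; ring
    · refine .of_forall fun n => le_of_eq ?_
      simp [B]; ring
  have hcd : ∀ n, ContDiff ℝ 1 ((B n).normed volume
      ⋆[ContinuousLinearMap.lsmul ℝ ℝ, volume] (fun y => η y * v y)) := fun n => by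
    have := (B n).hasCompactSupport_normed (μ := volume).contDiff_convolution_left
      (ContinuousLinearMap.lsmul ℝ ℝ) (n := 1) (B n).contDiff_normed hηv
    exact_mod_cast this
  refine (Lp.eLpNorm_lim_le_liminf_eLpNorm (fun n => (hcd n).continuous.aestronglyMeasurable)
    _ hlim).trans ?_
  refine (Filter.liminf_le_liminf (.of_forall fun n => ?_)).trans_eq
    (Filter.liminf_const (f := Filter.atTop (α := ℕ)) _)
  have hs := eLpNorm_le_eLpNorm_fderiv_of_eq_inner (volume : Measure (EuclideanSpace ℝ (Fin 3)))
    (hcd n) (((B n).hasCompactSupport_normed).convolution _ hηc.mul_right)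
    (p := 2) (p' := 6) (by norm_num) (by simp) (by simp; norm_num)
  simp only [ENNReal.coe_ofNat] at hs
  refine le_trans hs ?_
  gcongr
  have hρi : ∫⁻ x, ‖(B n).normed volume x‖ₑ = 1 := by
    have := (B n).integral_normed (μ := volume)
    rw [← ofReal_integral_norm_eq_lintegral_enorm (B n).integrable_normed]
    simp only [Real.norm_of_nonneg ((B n).nonneg_normed _), this, ENNReal.ofReal_one]
  calc eLpNorm (fderiv ℝ ((B n).normed volume
      ⋆[ContinuousLinearMap.lsmul ℝ ℝ, volume] (fun y => η y * v y))) 2 volume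
      ≤ eLpNorm (∑ i : Fin 3, fun x => ‖((B n).normed volume
      ⋆[ContinuousLinearMap.lsmul ℝ ℝ, volume] (fun y => η y * G i y +
        fderiv ℝ η y (EuclideanSpace.single i 1) * v y)) x‖) 2 volume := by
        refine eLpNorm_mono_real fun x => ?_
        refine (norm_clm_le _).trans (le_of_eq ?_)
        rw [Finset.sum_apply]
        refine Finset.sum_congr rfl fun i _ => ?_
        rw [conv_deriv v hv (G i) (hG i) i (hw i) η hη hηc _ (B n).contDiff_normed
          (B n).hasCompactSupport_normed]
    _ ≤ ∑ i : Fin 3, eLpNorm (fun x => ‖((B n).normed volume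
      ⋆[ContinuousLinearMap.lsmul ℝ ℝ, volume] (fun y => η y * G i y +
        fderiv ℝ η y (EuclideanSpace.single i 1) * v y)) x‖) 2 volume := by
        refine eLpNorm_sum_le (fun i _ => ?_) (by norm_num)
        refine AEStronglyMeasurable.norm ?_
        have hl : LocallyIntegrable (fun y => η y * G i y +
            fderiv ℝ η y (EuclideanSpace.single i 1) * v y) volume :=
          (((hG i).integrable_smul_left_of_hasCompactSupport hη.continuous hηc).add
          (hv.integrable_smul_left_of_hasCompactSupport 
            ((hη1.continuous_fderiv (by norm_num)).clm_apply continuous_const)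
            (hηc.fderiv_apply ℝ (EuclideanSpace.single i 1)))).locallyIntegrable
        exact ((B n).hasCompactSupport_normed.continuous_convolution_left _
          (B n).continuous_normed hl).aestronglyMeasurable
    _ ≤ _ := by
        refine Finset.sum_le_sum fun i _ => ?_
        rw [eLpNorm_norm]
        refine young_aux _ _ (B n).continuous_normed hρi _ ?_
        have a1 := hv.aestronglyMeasurable
        have a2 := (hG i).aestronglyMeasurable
        exact (hη.continuous.aestronglyMeasurable.mul a2).add
          (((hη1.continuous_fderiv (by norm_num)).clm_apply
            continuous_const).aestronglyMeasurable.mul a1)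

theorem weak_zero_of_not_aesm (v γ : EuclideanSpace ℝ (Fin 3) → ℝ)
    (hv : LocallyIntegrable v volume) (i : Fin 3)
    (hw : ∀ φ : EuclideanSpace ℝ (Fin 3) → ℝ, ContDiff ℝ (⊤ : ℕ∞) φ → HasCompactSupport φ →
      ∫ y, v y * fderiv ℝ φ y (EuclideanSpace.single i 1) = -∫ y, γ y * φ y)
    (hγ : ¬ AEStronglyMeasurable γ volume)
    (φ : EuclideanSpace ℝ (Fin 3) → ℝ) (hφ : ContDiff ℝ (⊤ : ℕ∞) φ) (hφc : HasCompactSupport φ) :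
    ∫ y, v y * fderiv ℝ φ y (EuclideanSpace.single i 1) = 0 := by
  have hint : ∀ ψ : EuclideanSpace ℝ (Fin 3) → ℝ, ContDiff ℝ (⊤ : ℕ∞) ψ → HasCompactSupport ψ →
      Integrable fun y => v y * fderiv ℝ ψ y (EuclideanSpace.single i 1) := by
    intro ψ hψ hψc
    have := hv.integrable_smul_left_of_hasCompactSupport
      (((hψ.of_le (by exact_mod_cast le_top) : ContDiff ℝ 1 ψ).continuous_fderiv
        (by norm_num)).clm_apply continuous_const)
      (hψc.fderiv_apply ℝ (EuclideanSpace.single i 1))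
    refine this.congr (.of_forall fun y => ?_)
    simp [mul_comm]
  obtain ⟨ψ, hψ, hψc, hn⟩ : ∃ ψ : EuclideanSpace ℝ (Fin 3) → ℝ, ContDiff ℝ (⊤ : ℕ∞) ψ ∧
      HasCompactSupport ψ ∧ ¬ AEStronglyMeasurable (fun y => γ y * ψ y) volume := by
    by_contra! hcon
    apply hγ
    let B : ℕ → ContDiffBump (0 : EuclideanSpace ℝ (Fin 3)) := fun n =>
      ⟨n + 1, n + 2, by positivity, by linarith⟩
    refine aestronglyMeasurable_of_tendsto_ae Filter.atTop
      (f := fun n y => γ y * B n y) (fun n => hcon _ (B n).contDiff (B n).hasCompactSupport)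
      (.of_forall fun y => ?_)
    refine tendsto_const_nhds.congr' ?_
    obtain ⟨N, hN⟩ := exists_nat_ge ‖y‖
    filter_upwards [Filter.eventually_ge_atTop N] with n hn
    have : B n y = 1 := by
      apply (B n).one_of_mem_closedBall
      rw [mem_closedBall_zero_iff]
      have : (N : ℝ) ≤ n := by exact_mod_cast hn
      simp only [B]
      linarith
    rw [this, mul_one]
  have hz : ∀ θ : EuclideanSpace ℝ (Fin 3) → ℝ, ContDiff ℝ (⊤ : ℕ∞) θ → HasCompactSupport θ →
      ¬ AEStronglyMeasurable (fun y => γ y * θ y) volume →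
      ∫ y, v y * fderiv ℝ θ y (EuclideanSpace.single i 1) = 0 := by
    intro θ h1 h2 h3
    rw [hw θ h1 h2, integral_undef (fun h => h3 h.aestronglyMeasurable), neg_zero]
  by_cases hm : AEStronglyMeasurable (fun y => γ y * φ y) volume
  · have h1 := hz (fun y => φ y + ψ y) (hφ.add hψ) (hφc.add hψc) (fun h => hn (by
      refine (h.sub hm).congr (.of_forall fun y => ?_)
      simp only [Pi.sub_apply]; ring))
    have h2 := hz ψ hψ hψc hn
    have h3 : ∀ y, fderiv ℝ (fun y => φ y + ψ y) y (EuclideanSpace.single i 1) =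
        fderiv ℝ φ y (EuclideanSpace.single i 1) + fderiv ℝ ψ y (EuclideanSpace.single i 1) := by
      intro y
      rw [fderiv_fun_add (hφ.differentiable (by simp) y) (hψ.differentiable (by simp) y)]
      rfl
    simp only [h3, mul_add] at h1
    rw [integral_add (hint φ hφ hφc) (hint ψ hψ hψc), h2, add_zero] at h1
    exact h1
  · exact hz φ hφ hφc hm

theorem cutoff_exists : ∃ (M : ℝ) (η : ℕ → EuclideanSpace ℝ (Fin 3) → ℝ), 0 ≤ M ∧
    (∀ n, ContDiff ℝ (⊤ : ℕ∞) (η n)) ∧ (∀ n, HasCompactSupport (η n)) ∧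
    (∀ n y, |η n y| ≤ Real.exp (‖y‖ ^ 2 / 8)) ∧
    (∀ n y, ‖fderiv ℝ (η n) y‖ ≤ M * Real.exp (‖y‖ ^ 2 / 8)) ∧
    (∀ y, Filter.Tendsto (fun n => η n y) Filter.atTop (𝓝 (Real.exp (‖y‖ ^ 2 / 24)))) := by
  let χ : ContDiffBump (0 : EuclideanSpace ℝ (Fin 3)) := ⟨1, 2, by norm_num, by norm_num⟩
  have hχ1 : ContDiff ℝ 1 χ := χ.contDiff
  obtain ⟨M, hM⟩ := (hχ1.continuous_fderiv (by norm_num)).bounded_above_of_compact_support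
    (χ.hasCompactSupport.fderiv ℝ)
  have hM0 : 0 ≤ M := (norm_nonneg _).trans (hM 0)
  have hexp : ∀ y : EuclideanSpace ℝ (Fin 3), Real.exp (‖y‖ ^ 2 / 24) ≤ Real.exp (‖y‖ ^ 2 / 8) := by
    intro y
    apply Real.exp_le_exp.2
    nlinarith [sq_nonneg ‖y‖]
  refine ⟨M + 1, fun n y => χ ((1 / ((n : ℝ) + 1)) • y) * Real.exp (‖y‖ ^ 2 / 24), by linarith,
    fun n => ?_, fun n => ?_, fun n y => ?_, fun n y => ?_, fun y => ?_⟩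
  · refine (χ.contDiff.comp (contDiff_const_smul _)).mul ?_
    exact Real.contDiff_exp.comp ((contDiff_norm_sq ℝ).div_const _)
  · refine HasCompactSupport.mul_right ?_
    exact χ.hasCompactSupport.comp_smul (by positivity)
  · rw [abs_mul, abs_of_nonneg χ.nonneg, Real.abs_exp]
    calc _ ≤ 1 * Real.exp (‖y‖ ^ 2 / 24) := by gcongr; exact χ.le_one
      _ ≤ _ := by rw [one_mul]; exact hexp y
  · have h1 : HasFDerivAt (fun y : EuclideanSpace ℝ (Fin 3) => χ ((1 / ((n : ℝ) + 1)) • y))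
        ((1 / ((n : ℝ) + 1)) • fderiv ℝ χ ((1 / ((n : ℝ) + 1)) • y)) y := by
      have := ((hχ1.differentiable (by norm_num)) ((1 / ((n : ℝ) + 1)) • y)).hasFDerivAt.comp y
        ((hasFDerivAt_id y).const_smul (1 / ((n : ℝ) + 1)))
      convert! this using 1
      ext; simp
    have h2 : HasFDerivAt (fun y : EuclideanSpace ℝ (Fin 3) => Real.exp (‖y‖ ^ 2 / 24))
        (Real.exp (‖y‖ ^ 2 / 24) • (1 / 12 : ℝ) • innerSL ℝ y) y := by
      have h3 := ((hasStrictFDerivAt_norm_sq y).hasFDerivAt.mul_const (1 / 24 : ℝ)).exp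
      convert! h3 using 1
      · ext z; ring_nf
      · ext z; simp; ring_nf
    have h3 : HasFDerivAt (fun y : EuclideanSpace ℝ (Fin 3) =>
        χ ((1 / ((n : ℝ) + 1)) • y) * Real.exp (‖y‖ ^ 2 / 24)) _ y := h1.mul h2
    rw [h3.fderiv]
    have b1 : ‖χ ((1 / ((n : ℝ) + 1)) • y) • Real.exp (‖y‖ ^ 2 / 24) • (1 / 12 : ℝ) • innerSL ℝ y‖
        ≤ Real.exp (‖y‖ ^ 2 / 8) := by
      rw [norm_smul, norm_smul, norm_smul, innerSL_apply_norm, Real.norm_of_nonneg χ.nonneg,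
        Real.norm_of_nonneg (Real.exp_pos _).le, Real.norm_of_nonneg (by norm_num)]
      calc _ ≤ 1 * (Real.exp (‖y‖ ^ 2 / 24) * (1 / 12 * ‖y‖)) := by gcongr; exact χ.le_one
        _ ≤ 1 * (Real.exp (‖y‖ ^ 2 / 24) * Real.exp (‖y‖ ^ 2 / 12)) := by
          gcongr
          have := Real.add_one_le_exp (‖y‖ ^ 2 / 12)
          nlinarith [sq_nonneg (‖y‖ - 1)]
        _ = _ := by rw [one_mul, ← Real.exp_add]; ring_nf
    have b2 : ‖Real.exp (‖y‖ ^ 2 / 24) • (1 / ((n : ℝ) + 1)) •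
        fderiv ℝ χ ((1 / ((n : ℝ) + 1)) • y)‖ ≤ M * Real.exp (‖y‖ ^ 2 / 8) := by
      rw [norm_smul, norm_smul, Real.norm_of_nonneg (Real.exp_pos _).le,
        Real.norm_of_nonneg (by positivity), mul_comm M]
      have : (1 / ((n : ℝ) + 1)) ≤ 1 := by
        rw [div_le_one (by positivity)]
        have : (0 : ℝ) ≤ n := n.cast_nonneg
        linarith
      calc _ ≤ Real.exp (‖y‖ ^ 2 / 8) * (1 * M) := by
            gcongr
            · norm_num
            · exact hM _
        _ = _ := by ring
    refine (norm_add_le _ _).trans ?_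
    linarith
  · refine tendsto_const_nhds.congr' ?_
    obtain ⟨N, hN⟩ := exists_nat_ge ‖y‖
    filter_upwards [Filter.eventually_ge_atTop N] with n hn
    have : χ ((1 / ((n : ℝ) + 1)) • y) = 1 := by
      apply χ.one_of_mem_closedBall
      rw [mem_closedBall_zero_iff, norm_smul, Real.norm_of_nonneg (by positivity)]
      have : (N : ℝ) ≤ n := by exact_mod_cast hn
      change _ ≤ (1 : ℝ)
      rw [one_div, inv_mul_le_iff₀ (by positivity)]
      linarith
    rw [this, one_mul]

/-- Weighted Sobolev embedding in dimension three:
`H¹(K) ⊆ L⁶(K)`. -/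
theorem stmt_12 (v : EuclideanSpace ℝ (Fin 3) → ℝ)
    (g : EuclideanSpace ℝ (Fin 3) → EuclideanSpace ℝ (Fin 3))
    (hvg : HasWeakGradient v g)
    (hint : Integrable (fun y : EuclideanSpace ℝ (Fin 3) =>
      Real.exp (‖y‖ ^ 2 / 4) * ((v y) ^ 2 + ‖g y‖ ^ 2))) :
    (∫⁻ y : EuclideanSpace ℝ (Fin 3),
      ENNReal.ofReal (Real.exp (‖y‖ ^ 2 / 4) * (v y) ^ 6)) < ⊤ := by
  classical
  obtain ⟨hv, hw⟩ := hvg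
  let S : EuclideanSpace ℝ (Fin 3) → ℝ := fun y =>
    Real.sqrt (Real.exp (‖y‖ ^ 2 / 4) * ((v y) ^ 2 + ‖g y‖ ^ 2))
  have hS : MemLp S 2 volume := by
    have hm : AEStronglyMeasurable S volume :=
      Real.continuous_sqrt.comp_aestronglyMeasurable hint.aestronglyMeasurable
    rw [memLp_two_iff_integrable_sq hm]
    refine hint.congr (.of_forall fun y => ?_)
    exact (Real.sq_sqrt (by positivity)).symm
  have hE : ∀ y : EuclideanSpace ℝ (Fin 3),
      Real.exp (‖y‖ ^ 2 / 8) ^ 2 = Real.exp (‖y‖ ^ 2 / 4) := by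
    intro y; rw [← Real.exp_nat_mul]; congr 1; push_cast; ring
  have hSv : ∀ y, Real.exp (‖y‖ ^ 2 / 8) * |v y| ≤ S y := by
    intro y
    apply Real.le_sqrt_of_sq_le
    rw [mul_pow, hE, sq_abs]
    gcongr
    nlinarith [sq_nonneg ‖g y‖]
  have hSg : ∀ y, Real.exp (‖y‖ ^ 2 / 8) * ‖g y‖ ≤ S y := by
    intro y
    apply Real.le_sqrt_of_sq_le
    rw [mul_pow, hE]
    gcongr
    nlinarith [sq_nonneg (v y)]
  let G : Fin 3 → EuclideanSpace ℝ (Fin 3) → ℝ := fun i =>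
    if AEStronglyMeasurable (fun y => g y i) volume then fun y => g y i else fun _ => 0
  have hGm : ∀ i, AEStronglyMeasurable (G i) volume := by
    intro i
    by_cases h : AEStronglyMeasurable (fun y => g y i) volume
    · simp only [G, if_pos h]; exact h
    · simp only [G, if_neg h]; exact aestronglyMeasurable_const
  have hGle : ∀ i y, |G i y| ≤ ‖g y‖ := by
    intro i y
    by_cases h : AEStronglyMeasurable (fun y => g y i) volume
    · simp only [G, if_pos h]; exact PiLp.norm_apply_le (g y) i
    · simp only [G, if_neg h]; simp
  have hGw : ∀ i, ∀ φ : EuclideanSpace ℝ (Fin 3) → ℝ, ContDiff ℝ (⊤ : ℕ∞) φ →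
      HasCompactSupport φ →
      ∫ y, v y * fderiv ℝ φ y (EuclideanSpace.single i 1) = -∫ y, G i y * φ y := by
    intro i φ h1 h2
    by_cases h : AEStronglyMeasurable (fun y => g y i) volume
    · simp only [G, if_pos h]; exact hw φ h1 h2 i
    · simp only [G, if_neg h]
      rw [weak_zero_of_not_aesm v (fun y => g y i) hv i (fun φ h1 h2 => hw φ h1 h2 i) h φ h1 h2]
      simp
  have hGl : ∀ i, LocallyIntegrable (G i) volume := by
    intro i
    refine (hS.mono (hGm i) (.of_forall fun y => ?_)).locallyIntegrable (by norm_num)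
    refine (hGle i y).trans (le_trans ?_ ((hSg y).trans (le_abs_self _)))
    have : 1 ≤ Real.exp (‖y‖ ^ 2 / 8) := Real.one_le_exp (by positivity)
    nlinarith [norm_nonneg (g y)]
  obtain ⟨C, hC⟩ := local_sobolev
  obtain ⟨M, η, hM, hη, hηc, hη1, hη2, hη3⟩ := cutoff_exists
  have hb : ∀ n, eLpNorm (fun y => η n y * v y) 6 volume ≤
      C * ∑ i : Fin 3, eLpNorm (fun y => (1 + M) * S y) 2 volume := by
    intro n
    refine (hC v hv G hGl hGw (η n) (hη n) (hηc n)).trans ?_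
    gcongr with i
    refine eLpNorm_mono_real fun y => ?_
    have a1 : |η n y * G i y| ≤ S y := by
      rw [abs_mul]
      refine le_trans ?_ (hSg y)
      exact mul_le_mul (hη1 n y) (hGle i y) (abs_nonneg _) (Real.exp_pos _).le
    have a2 : |fderiv ℝ (η n) y (EuclideanSpace.single i 1) * v y| ≤ M * S y := by
      rw [abs_mul]
      have : |fderiv ℝ (η n) y (EuclideanSpace.single i 1)| ≤ M * Real.exp (‖y‖ ^ 2 / 8) := by
        refine le_trans ?_ (hη2 n y)
        have := (fderiv ℝ (η n) y).le_opNorm (EuclideanSpace.single i 1)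
        simpa using this
      calc _ ≤ M * Real.exp (‖y‖ ^ 2 / 8) * |v y| := by gcongr
        _ = M * (Real.exp (‖y‖ ^ 2 / 8) * |v y|) := by ring
        _ ≤ _ := by gcongr; exact hSv y
    rw [Real.norm_eq_abs]
    refine (abs_add_le _ _).trans ?_
    linarith
  have hfin : eLpNorm (fun y => Real.exp (‖y‖ ^ 2 / 24) * v y) 6 volume < ⊤ := by
    refine lt_of_le_of_lt (Lp.eLpNorm_lim_le_liminf_eLpNorm
      (f := fun n y => η n y * v y)
      (fun n => (hη n).continuous.aestronglyMeasurable.mul hv.aestronglyMeasurable) _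
      (.of_forall fun y => (hη3 y).mul_const _)) ?_
    refine lt_of_le_of_lt ((Filter.liminf_le_liminf (.of_forall hb)).trans_eq
      (Filter.liminf_const (f := Filter.atTop (α := ℕ)) _)) ?_
    refine ENNReal.mul_lt_top ENNReal.coe_lt_top ?_
    rw [ENNReal.sum_lt_top]
    intro i _
    exact (hS.const_mul (1 + M)).2
  rw [eLpNorm_lt_top_iff_lintegral_rpow_enorm_lt_top (by norm_num) (by norm_num)] at hfin
  refine lt_of_eq_of_lt (lintegral_congr fun y => ?_) hfin
  have e6 : (6 : ℝ≥0∞).toReal = ((6 : ℕ) : ℝ) := by simp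
  rw [e6, ENNReal.rpow_natCast, ← ofReal_norm_eq_enorm, ← ENNReal.ofReal_pow (norm_nonneg _)]
  congr 1
  rw [Real.norm_eq_abs, Even.pow_abs (by decide), mul_pow, ← Real.exp_nat_mul]
  congr 2
  push_cast; ring
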